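/- arXiv:2506.12463 — 3 statements merged into one kernel-verified Lean document; each statement's English description precedes it below -/
import Mathlib

section
/- Let n ≥ 1, let W be an n×n real row-stochastic matrix (W_{ij} ≥ 0 and Σ_j W_{ij} = 1 for every i), and let Θ = diag(θ) with θ_i ∈ [0,1] for all i. Assume that for every agent i, either θ_i > 0 or there exist k ≥ 1 and an agent j with θ_j > 0 such that (W^k)_{ij} > 0. Then: (a) the matrix (I − Θ)W is Schur stable, i.e., every complex eigenvalue of (I − Θ)W has modulus strictly less than 1 (in particular I − (I − Θ)W is invertible); and (b) the matrix P = (I − (I − Θ)W)^{-1} Θ is row-stochastic, i.e., all its entries are nonnegative and each of its rows sums to 1. -/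
open Matrix Finset

lemma fj_entry {n : ℕ} (W : Matrix (Fin n) (Fin n) ℝ) (θ : Fin n → ℝ) (i j : Fin n) :
    ((1 - Matrix.diagonal θ) * W) i j = (1 - θ i) * W i j := by
  rw [sub_mul, one_mul, Matrix.sub_apply, Matrix.diagonal_mul]; ring

/-- Maximum principle. -/
lemma fj_max {n : ℕ} (W : Matrix (Fin n) (Fin n) ℝ)
    (hW0 : ∀ i j, 0 ≤ W i j) (hW1 : ∀ i, ∑ j, W i j = 1)
    (θ : Fin n → ℝ) (hθ : ∀ i, θ i ∈ Set.Icc (0 : ℝ) 1)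
    (hreach : ∀ i, 0 < θ i ∨ ∃ k, 1 ≤ k ∧ ∃ j, 0 < θ j ∧ 0 < (W ^ k) i j)
    (u : Fin n → ℝ) (hu : ∀ i, u i ≤ (1 - θ i) * ∑ j, W i j * u j) (i : Fin n) : u i ≤ 0 := by
  by_contra! hi
  obtain ⟨m, -, hm⟩ := Finset.exists_max_image Finset.univ u ⟨i, Finset.mem_univ i⟩
  have hm' : ∀ j, u j ≤ u m := fun j => hm j (Finset.mem_univ j)
  have hM : 0 < u m := lt_of_lt_of_le hi (hm' i)
  have hsum : ∀ a, ∑ j, W a j * (u m - u j) = u m - ∑ j, W a j * u j := by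
    intro a
    simp only [mul_sub, Finset.sum_sub_distrib, ← Finset.sum_mul, hW1, one_mul]
  have hnn : ∀ a j, 0 ≤ W a j * (u m - u j) := fun a j =>
    mul_nonneg (hW0 a j) (sub_nonneg.2 (hm' j))
  have hle : ∀ a, ∑ j, W a j * u j ≤ u m := by
    intro a
    have := Finset.sum_nonneg (s := Finset.univ) fun j _ => hnn a j
    rw [hsum] at this; linarith
  have hθ0 : ∀ a, u a = u m → θ a = 0 := by
    intro a ha
    have h1 := hu a
    have h2 := mul_le_mul_of_nonneg_left (hle a) (sub_nonneg.2 (hθ a).2)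
    have h3 := (hθ a).1
    rw [ha] at h1
    have : θ a * u m ≤ 0 := by linarith
    by_contra hne
    have := mul_pos (lt_of_le_of_ne h3 (Ne.symm hne)) hM
    linarith
  have hstep : ∀ a, u a = u m → ∀ j, 0 < W a j → u j = u m := by
    intro a ha j hj
    have h1 := hu a
    rw [hθ0 a ha, ha] at h1
    have h2 : ∑ j, W a j * (u m - u j) = 0 := by
      rw [hsum]; linarith [hle a]
    have h3 := (Finset.sum_eq_zero_iff_of_nonneg (fun j _ => hnn a j)).1 h2 j (Finset.mem_univ j)
    rcases mul_eq_zero.1 h3 with h | h <;> linarith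
  have hk : ∀ k : ℕ, ∀ a, u a = u m → ∀ j, 0 < (W ^ k) a j → u j = u m := by
    intro k
    induction k with
    | zero =>
      intro a ha j hj
      rw [pow_zero, Matrix.one_apply] at hj
      split_ifs at hj with h
      · rw [← h, ha]
      · exact absurd hj (lt_irrefl _)
    | succ k ih =>
      intro a ha j hj
      rw [pow_succ', Matrix.mul_apply] at hj
      obtain ⟨b, -, hb⟩ := Finset.exists_lt_of_sum_lt (s := Finset.univ) (f := fun _ => (0:ℝ))
        (by simpa using hj)
      have hb' : 0 < W a b := by
        refine lt_of_le_of_ne (hW0 a b) fun h => ?_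
        simp [← h] at hb
      exact ih b (hstep a ha b hb') j (pos_of_mul_pos_right hb hb'.le)
  rcases hreach m with h | ⟨k, -, j, hj, hp⟩
  · exact h.ne' (hθ0 m rfl)
  · exact hj.ne' (hθ0 j (hk k m rfl j hp))

/-- FJ model convergence matrix: Schur stability of `(I-Θ)W` and row-stochasticity of
`P = (I - (I-Θ)W)⁻¹ Θ`. -/
theorem fj_schur_stable_and_P_stochastic
    (n : ℕ) (hn : 1 ≤ n) (W : Matrix (Fin n) (Fin n) ℝ)
    (hW0 : ∀ i j, 0 ≤ W i j) (hW1 : ∀ i, ∑ j, W i j = 1)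
    (θ : Fin n → ℝ) (hθ : ∀ i, θ i ∈ Set.Icc (0 : ℝ) 1)
    (hreach : ∀ i, 0 < θ i ∨ ∃ k, 1 ≤ k ∧ ∃ j, 0 < θ j ∧ 0 < (W ^ k) i j) :
    (∀ μ ∈ spectrum ℂ (((1 - Matrix.diagonal θ) * W).map (Complex.ofReal)),
        ‖μ‖ < 1) ∧
    IsUnit (1 - (1 - Matrix.diagonal θ) * W) ∧
    (∀ i j, 0 ≤ ((1 - (1 - Matrix.diagonal θ) * W)⁻¹ * Matrix.diagonal θ) i j) ∧
    (∀ i, ∑ j, ((1 - (1 - Matrix.diagonal θ) * W)⁻¹ * Matrix.diagonal θ) i j = 1) := by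
  have key := fj_max W hW0 hW1 θ hθ hreach
  have hA := fj_entry W θ
  set A := (1 - Matrix.diagonal θ) * W with hAdef
  have hmv : ∀ (v : Fin n → ℝ) i, (A *ᵥ v) i = (1 - θ i) * ∑ j, W i j * v j := by
    intro v i
    simp only [Matrix.mulVec, dotProduct, hA, Finset.mul_sum, mul_assoc]
  have hunit : IsUnit (1 - A) := by
    rw [Matrix.isUnit_iff_isUnit_det, isUnit_iff_ne_zero]
    intro h0
    obtain ⟨v, hv, hv0⟩ := Matrix.exists_mulVec_eq_zero_iff.2 h0
    rw [Matrix.sub_mulVec, Matrix.one_mulVec, sub_eq_zero] at hv0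
    have e : ∀ i, v i = (1 - θ i) * ∑ j, W i j * v j := fun i => by
      rw [← hmv, ← hv0]
    apply hv
    funext i
    have h1 := key v (fun i => (e i).le) i
    have h2 := key (fun i => - v i) (fun i => by
      simp only [mul_neg, Finset.sum_neg_distrib]; linarith [e i]) i
    simp only [Pi.zero_apply]
    linarith
  have hdet : IsUnit (1 - A).det := (Matrix.isUnit_iff_isUnit_det _).1 hunit
  refine ⟨?_, hunit, ?_, ?_⟩
  · intro μ hμ
    by_contra! hge
    rw [spectrum.mem_iff, Matrix.isUnit_iff_isUnit_det, isUnit_iff_ne_zero, not_not] at hμ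
    obtain ⟨v, hv, hv0⟩ := Matrix.exists_mulVec_eq_zero_iff.2 hμ
    rw [Matrix.sub_mulVec, sub_eq_zero, Algebra.algebraMap_eq_smul_one, Matrix.smul_mulVec,
      Matrix.one_mulVec] at hv0
    apply hv
    funext i
    have h := key (fun i => ‖v i‖) (fun i => by
      have e := congrArg norm (congrFun hv0 i)
      simp only [Pi.smul_apply, smul_eq_mul, norm_mul, Matrix.mulVec, dotProduct,
        Matrix.map_apply, hA] at e
      calc ‖v i‖ ≤ ‖μ‖ * ‖v i‖ := le_mul_of_one_le_left (norm_nonneg _) hge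
        _ ≤ ∑ j, ‖((((1 - θ i) * W i j : ℝ)) : ℂ) * v j‖ := by rw [e]; exact norm_sum_le _ _
        _ = _ := by
          rw [Finset.mul_sum]
          refine Finset.sum_congr rfl fun j _ => ?_
          rw [norm_mul, Complex.norm_real, Real.norm_of_nonneg
            (mul_nonneg (sub_nonneg.2 (hθ i).2) (hW0 i j)), mul_assoc]) i
    exact norm_le_zero_iff.1 h
  · intro i j
    set P := (1 - A)⁻¹ * Matrix.diagonal θ with hP
    have hPe : (1 - A) * P = Matrix.diagonal θ := by
      rw [hP, Matrix.mul_nonsing_inv_cancel_left _ _ hdet]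
    have h := key (fun i => - P i j) (fun i => by
      have e := congrFun (congrFun hPe i) j
      rw [sub_mul, one_mul, Matrix.sub_apply] at e
      have e2 : (A * P) i j = (1 - θ i) * ∑ k, W i k * P k j := hmv (fun k => P k j) i
      have e3 : 0 ≤ Matrix.diagonal θ i j := by
        rw [Matrix.diagonal_apply]; split_ifs
        exacts [(hθ i).1, le_rfl]
      simp only [mul_neg, Finset.sum_neg_distrib]; linarith) i
    simpa using h
  · intro i
    have e : (1 - A) *ᵥ (fun _ => 1) = θ := by
      funext i
      rw [Matrix.sub_mulVec, Matrix.one_mulVec, Pi.sub_apply, hmv]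
      simp [hW1]
    have e2 : (1 - A)⁻¹ *ᵥ θ = fun _ => 1 := by
      conv_lhs => rw [← e]
      rw [Matrix.mulVec_mulVec, Matrix.nonsing_inv_mul _ hdet, Matrix.one_mulVec]
    have e3 := congrFun e2 i
    simpa only [Matrix.mul_diagonal, Matrix.mulVec, dotProduct] using e3
end

section
/- Assume W is strongly connected, ω ∈ (0,1), and there is θ ∈ (0,1] with θ ≤ θ_i ≤ 1 for all i ∈ V. Let S ⊆ V be nonempty with θ_i < 1 for some i ∈ S. For ℓ ∈ ℕ define the truncated absorbing probability p_ℓ = (1/n) 𝟙ᵀ (Σ_{k=0}^{ℓ} H(S)^k)(I − Θ) ω Σ_{j∈S} e_j and the exact absorbing probability q = (1/n) 𝟙ᵀ (I − H(S))^{-1}(I − Θ) ω Σ_{j∈S} e_j (so 0 < p_ℓ ≤ q ≤ 1). Let ε, δ, σ ∈ (0,1) and let r ∈ ℕ and ℓ ∈ ℕ satisfy r ≥ 3 log(2/δ)/(σ² ε² p_ℓ) and ℓ ≥ (log(θ(1−σ) ε p_ℓ) − log ω)/log(1−θ) − 2. Let X₁,…,X_r be independent Bernoulli random variables, each equal to 1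 with probability p_ℓ and 0 otherwise, and let X̄ = (1/r) Σ_{k=1}^{r} X_k. Then ℙ( |X̄ − q| < ε p_ℓ ) ≥ 1 − δ. -/
open Matrix Finset

/-- `H(S) = (I - ω Σ_{j∈S} e_j e_jᵀ) (I - Θ) W`. -/
noncomputable def Hmat {n : ℕ} (W : Matrix (Fin n) (Fin n) ℝ) (θ : Fin n → ℝ) (ω : ℝ)
    (S : Finset (Fin n)) : Matrix (Fin n) (Fin n) ℝ :=
  (1 - Matrix.diagonal (fun i => if i ∈ S then ω else 0)) *
    ((1 - Matrix.diagonal θ) * W)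

/-- `p₀(S) = (I - H(S))⁻¹ (I - Θ) ω Σ_{j∈S} e_j`. -/
noncomputable def p0vec {n : ℕ} (W : Matrix (Fin n) (Fin n) ℝ) (θ : Fin n → ℝ) (ω : ℝ)
    (S : Finset (Fin n)) : Fin n → ℝ :=
  ((1 - Hmat W θ ω S)⁻¹ * (1 - Matrix.diagonal θ)).mulVec
    (fun j => if j ∈ S then ω else 0)

/-- The influencer's social power `sp₀(S) = (𝟙ᵀ p₀(S) + 1)/(n+1)`. -/
noncomputable def sp0 {n : ℕ} (W : Matrix (Fin n) (Fin n) ℝ) (θ : Fin n → ℝ) (ω : ℝ)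
    (S : Finset (Fin n)) : ℝ :=
  ((∑ i, p0vec W θ ω S i) + 1) / (n + 1)

theorem aux_H_facts (n : ℕ) (W : Matrix (Fin n) (Fin n) ℝ)
    (hW0 : ∀ i j, 0 ≤ W i j) (hW1 : ∀ i, ∑ j, W i j = 1)
    (θv : Fin n → ℝ) (θ : ℝ)
    (hθv : ∀ i, θ ≤ θv i ∧ θv i ≤ 1)
    (ω : ℝ) (hω : ω ∈ Set.Ioo (0 : ℝ) 1)
    (S : Finset (Fin n)) :
    (∀ i j, 0 ≤ Hmat W θv ω S i j) ∧ (∀ i, ∑ j, Hmat W θv ω S i j ≤ 1 - θ) := by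
  have hform : ∀ i j, Hmat W θv ω S i j =
      (1 - (if i ∈ S then ω else 0)) * ((1 - θv i) * W i j) := by
    intro i j
    have h1 : ∀ d : Fin n → ℝ, (1 - Matrix.diagonal d) = Matrix.diagonal (fun i => 1 - d i) := by
      intro d
      rw [← Matrix.diagonal_one, Matrix.diagonal_sub]
    unfold Hmat
    rw [h1, h1, Matrix.diagonal_mul, Matrix.diagonal_mul]
  have hc : ∀ i, 0 ≤ (1 - (if i ∈ S then ω else 0)) ∧ (1 - (if i ∈ S then ω else 0)) ≤ 1 := by
    intro i
    obtain ⟨h1, h2⟩ := hω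
    split_ifs <;> constructor <;> linarith
  refine ⟨fun i j => ?_, fun i => ?_⟩
  · rw [hform]
    exact mul_nonneg (hc i).1 (mul_nonneg (by linarith [(hθv i).2]) (hW0 i j))
  · simp_rw [hform]
    rw [← Finset.mul_sum, ← Finset.mul_sum, hW1, mul_one]
    have := hθv i
    have := hc i
    nlinarith

theorem aux_pow_bound {n : ℕ} (H : Matrix (Fin n) (Fin n) ℝ) (a : ℝ) (ha : 0 ≤ a)
    (h0 : ∀ i j, 0 ≤ H i j) (h1 : ∀ i, ∑ j, H i j ≤ a) (x : Fin n → ℝ) (M : ℝ) (hM : 0 ≤ M)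
    (hx : ∀ i, |x i| ≤ M) (k : ℕ) : ∀ i, |(H ^ k).mulVec x i| ≤ a ^ k * M := by
  induction k with
  | zero => simpa using hx
  | succ k ih =>
    intro i
    rw [pow_succ', ← Matrix.mulVec_mulVec]
    have : (H.mulVec ((H ^ k).mulVec x)) i = ∑ j, H i j * ((H ^ k).mulVec x) j := rfl
    rw [this]
    calc _ ≤ ∑ j, |H i j * ((H ^ k).mulVec x) j| := Finset.abs_sum_le_sum_abs _ _
      _ ≤ ∑ j, H i j * (a ^ k * M) := by
          refine Finset.sum_le_sum fun j _ => ?_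
          rw [abs_mul, abs_of_nonneg (h0 i j)]
          exact mul_le_mul_of_nonneg_left (ih j) (h0 i j)
      _ = (∑ j, H i j) * (a ^ k * M) := by rw [Finset.sum_mul]
      _ ≤ a * (a ^ k * M) := mul_le_mul_of_nonneg_right (h1 i) (by positivity)
      _ = _ := by ring

theorem aux_pow_nonneg {n : ℕ} (H : Matrix (Fin n) (Fin n) ℝ)
    (h0 : ∀ i j, 0 ≤ H i j) (x : Fin n → ℝ)
    (hx : ∀ i, 0 ≤ x i) (k : ℕ) : ∀ i, 0 ≤ (H ^ k).mulVec x i := by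
  induction k with
  | zero => simpa using hx
  | succ k ih =>
    intro i
    rw [pow_succ', ← Matrix.mulVec_mulVec]
    have : (H.mulVec ((H ^ k).mulVec x)) i = ∑ j, H i j * ((H ^ k).mulVec x) j := rfl
    rw [this]
    exact Finset.sum_nonneg fun j _ => mul_nonneg (h0 i j) (ih j)

theorem aux_isUnit {n : ℕ} (H : Matrix (Fin n) (Fin n) ℝ)
    (h0 : ∀ i j, 0 ≤ H i j) (h1 : ∀ i, ∑ j, H i j < 1) : IsUnit (1 - H).det := by
  rw [isUnit_iff_ne_zero]
  apply det_ne_zero_of_sum_row_lt_diag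
  intro k
  have hk := h1 k
  rw [← Finset.add_sum_erase _ _ (Finset.mem_univ k)] at hk
  have hs : ∑ j ∈ Finset.univ.erase k, ‖(1 - H) k j‖ = ∑ j ∈ Finset.univ.erase k, H k j := by
    refine Finset.sum_congr rfl fun j hj => ?_
    have : k ≠ j := (Finset.ne_of_mem_erase hj).symm
    rw [Matrix.sub_apply, Matrix.one_apply_ne this, zero_sub, norm_neg, Real.norm_eq_abs,
      abs_of_nonneg (h0 k j)]
  rw [hs, Matrix.sub_apply, Matrix.one_apply_eq, Real.norm_eq_abs]
  exact lt_of_lt_of_le (by linarith) (le_abs_self _)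

theorem aux_tail {n : ℕ} (H : Matrix (Fin n) (Fin n) ℝ) (θ : ℝ) (hθ0 : 0 < θ) (hθ1 : θ ≤ 1)
    (h0 : ∀ i j, 0 ≤ H i j) (h1 : ∀ i, ∑ j, H i j ≤ 1 - θ) (v : Fin n → ℝ) (B : ℝ)
    (hB : 0 ≤ B) (hv : ∀ i, |v i| ≤ B) (ℓ : ℕ) (i : Fin n) :
    |((1 - H)⁻¹.mulVec v) i - ((∑ k ∈ Finset.range (ℓ + 1), H ^ k).mulVec v) i|
      ≤ (1 - θ) ^ (ℓ + 1) * (B / θ) := by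
  have hu := aux_isUnit H h0 (fun i => lt_of_le_of_lt (h1 i) (by linarith))
  set x := (1 - H)⁻¹.mulVec v with hx
  have hvx : v = (1 - H).mulVec x := by
    rw [hx, Matrix.mulVec_mulVec, Matrix.mul_nonsing_inv _ hu, Matrix.one_mulVec]
  have hxM : ∀ i, |x i| ≤ B / θ := by
    obtain ⟨m, -, hm⟩ := Finset.exists_max_image Finset.univ (fun i => |x i|) ⟨i, Finset.mem_univ i⟩
    have hb := aux_pow_bound H (1 - θ) (by linarith) h0 h1 x (|x m|) (abs_nonneg _)
      (fun j => hm j (Finset.mem_univ j)) 1 m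
    rw [pow_one, pow_one] at hb
    have hxm : x m = v m + H.mulVec x m := by
      rw [hvx, Matrix.sub_mulVec, Matrix.one_mulVec, Pi.sub_apply]; ring
    have h2 : |x m| ≤ B + (1 - θ) * |x m| := by
      calc |x m| = |v m + H.mulVec x m| := by rw [← hxm]
        _ ≤ |v m| + |H.mulVec x m| := abs_add_le _ _
        _ ≤ _ := add_le_add (hv m) hb
    intro j
    refine (hm j (Finset.mem_univ j)).trans ?_
    rw [le_div_iff₀ hθ0]
    linarith
  have hd : x i - ((∑ k ∈ Finset.range (ℓ + 1), H ^ k).mulVec v) i = (H ^ (ℓ + 1)).mulVec x i := by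
    rw [hvx, Matrix.mulVec_mulVec, geom_sum_mul_neg, Matrix.sub_mulVec, Matrix.one_mulVec,
      Pi.sub_apply]; ring
  rw [hd]
  exact aux_pow_bound H (1 - θ) (by linarith) h0 h1 x _ (by positivity) hxM _ i

open MeasureTheory ProbabilityTheory in
theorem aux_mgf {Ω : Type} [MeasurableSpace Ω] (μ : Measure Ω) [IsProbabilityMeasure μ]
    (X : Ω → ℝ) (hX : Measurable X) (h01 : ∀ w, X w = 0 ∨ X w = 1) (p : ℝ) (hp : 0 ≤ p)
    (h1 : μ {w | X w = 1} = ENNReal.ofReal p) (t : ℝ) :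
    Integrable (fun w => Real.exp (t * X w)) μ ∧ mgf X μ t ≤ Real.exp (p * (Real.exp t - 1)) := by
  have hms : MeasurableSet {w | X w = 1} := hX (measurableSet_singleton 1)
  have he : (fun w => Real.exp (t * X w)) =
      fun w => 1 + (Real.exp t - 1) * ({w | X w = 1}.indicator (fun _ => (1 : ℝ)) w) := by
    funext w
    rcases h01 w with h | h <;> simp [h, Set.indicator]
  have hi : Integrable ({w | X w = 1}.indicator (fun _ => (1 : ℝ))) μ :=
    (integrable_const 1).indicator hms
  constructor
  · rw [he]
    exact (integrable_const 1).add (hi.const_mul _)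
  · unfold mgf
    rw [he, integral_add (integrable_const 1) (hi.const_mul _), integral_const_mul,
      integral_indicator_const _ hms]
    have : μ.real {w | X w = 1} = p := by
      rw [Measure.real, h1, ENNReal.toReal_ofReal hp]
    rw [this]
    have := Real.add_one_le_exp (p * (Real.exp t - 1))
    simp
    linarith

open MeasureTheory ProbabilityTheory in
theorem aux_mgf_sum {Ω : Type} [MeasurableSpace Ω] (μ : Measure Ω) [IsProbabilityMeasure μ]
    (r : ℕ) (X : Fin r → Ω → ℝ) (hX : ∀ k, Measurable (X k)) (hind : iIndepFun X μ)
    (h01 : ∀ k w, X k w = 0 ∨ X k w = 1) (p : ℝ) (hp : 0 ≤ p)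
    (h1 : ∀ k, μ {w | X k w = 1} = ENNReal.ofReal p) (t : ℝ) :
    Integrable (fun w => Real.exp (t * (∑ k, X k) w)) μ ∧
      mgf (∑ k, X k) μ t ≤ Real.exp (r * (p * (Real.exp t - 1))) := by
  constructor
  · exact hind.integrable_exp_mul_sum hX (fun k _ => (aux_mgf μ (X k) (hX k) (h01 k) p hp (h1 k) t).1)
  · rw [hind.mgf_sum hX]
    calc _ ≤ ∏ k : Fin r, Real.exp (p * (Real.exp t - 1)) :=
          Finset.prod_le_prod (fun k _ => mgf_nonneg)
            (fun k _ => (aux_mgf μ (X k) (hX k) (h01 k) p hp (h1 k) t).2)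
      _ = _ := by rw [Finset.prod_const, Finset.card_univ, Fintype.card_fin, ← Real.exp_nat_mul]

theorem aux_upper (η : ℝ) (h0 : 0 < η) (h1 : η < 1) :
    (Real.exp (Real.log (1 + η)) - 1) - Real.log (1 + η) * (1 + η) ≤ -(η ^ 2 / 3) := by
  rw [Real.exp_log (by linarith)]
  have h := Real.le_log_one_add_of_nonneg h0.le
  have h2 : η + η ^ 2 / 3 ≤ 2 * η / (η + 2) * (1 + η) := by
    rw [div_mul_eq_mul_div, le_div_iff₀ (by linarith)]
    nlinarith [mul_pos (pow_pos h0 2) (sub_pos.2 h1)]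
  nlinarith

theorem aux_lower (η : ℝ) (h0 : 0 < η) :
    (Real.exp (-η) - 1) + η * (1 - η) ≤ -(η ^ 2 / 3) := by
  have h := Real.quadratic_le_exp_of_nonneg h0.le
  have h2 : Real.exp (-η) ≤ 1 - η + η ^ 2 / 2 := by
    rw [Real.exp_neg, inv_le_iff_one_le_mul₀ (Real.exp_pos _)]
    have : 0 ≤ 1 - η + η ^ 2 / 2 := by nlinarith [sq_nonneg (η - 1)]
    nlinarith [mul_le_mul_of_nonneg_left h this, sq_nonneg (η ^ 2)]
  nlinarith [sq_nonneg η]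

open MeasureTheory ProbabilityTheory in
theorem aux_chernoff {Ω : Type} [MeasurableSpace Ω] (μ : Measure Ω) [IsProbabilityMeasure μ]
    (r : ℕ) (X : Fin r → Ω → ℝ) (hX : ∀ k, Measurable (X k)) (hind : iIndepFun X μ)
    (h01 : ∀ k w, X k w = 0 ∨ X k w = 1) (p : ℝ) (hp : 0 ≤ p)
    (h1 : ∀ k, μ {w | X k w = 1} = ENNReal.ofReal p) (η : ℝ) (hη0 : 0 < η) (hη1 : η < 1) :
    μ.real {w | (1 + η) * (r * p) ≤ (∑ k, X k) w} ≤ Real.exp (-(r * p * (η ^ 2 / 3))) ∧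
    μ.real {w | (∑ k, X k) w ≤ (1 - η) * (r * p)} ≤ Real.exp (-(r * p * (η ^ 2 / 3))) := by
  have hrp : 0 ≤ (r : ℝ) * p := by positivity
  constructor
  · obtain ⟨hi, hm⟩ := aux_mgf_sum μ r X hX hind h01 p hp h1 (Real.log (1 + η))
    refine (measure_ge_le_exp_mul_mgf _ (Real.log_nonneg (by linarith)) hi).trans ?_
    refine (mul_le_mul_of_nonneg_left hm (Real.exp_pos _).le).trans ?_
    rw [← Real.exp_add, Real.exp_le_exp]
    nlinarith [mul_le_mul_of_nonneg_left (aux_upper η hη0 hη1) hrp]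
  · obtain ⟨hi, hm⟩ := aux_mgf_sum μ r X hX hind h01 p hp h1 (-η)
    refine (measure_le_le_exp_mul_mgf _ (by linarith) hi).trans ?_
    refine (mul_le_mul_of_nonneg_left hm (Real.exp_pos _).le).trans ?_
    rw [← Real.exp_add, Real.exp_le_exp]
    nlinarith [mul_le_mul_of_nonneg_left (aux_lower η hη0) hrp]

open MeasureTheory ProbabilityTheory in
theorem aux_final {Ω : Type} [MeasurableSpace Ω] (μ : Measure Ω) [IsProbabilityMeasure μ]
    (r : ℕ) (X : Fin r → Ω → ℝ) (hXmeas : ∀ k, Measurable (X k)) (hXindep : iIndepFun X μ)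
    (hX01 : ∀ k w, X k w = 0 ∨ X k w = 1) (p q σ ε δ η : ℝ) (hp0 : 0 < p)
    (hX1 : ∀ k, μ {w | X k w = 1} = ENNReal.ofReal p) (hη : η = σ * ε)
    (hη0 : 0 < η) (hη1 : η < 1) (hr0 : (0 : ℝ) < r)
    (hexp : Real.exp (-(r * p * (η ^ 2 / 3))) ≤ δ / 2)
    (hqp : |q - p| ≤ (1 - σ) * ε * p) :
    ENNReal.ofReal (1 - δ) ≤ μ {ωp | |(∑ k, X k ωp) / (r : ℝ) - q| < ε * p} := by
  obtain ⟨hU, hLo⟩ := aux_chernoff μ r X hXmeas hXindep hX01 p hp0.le hX1 η hη0 hη1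
  set U := {w | (1 + η) * (r * p) ≤ (∑ k, X k) w} with hUdef
  set L := {w | (∑ k, X k) w ≤ (1 - η) * (r * p)} with hLdef
  have hmeas : Measurable (∑ k, X k) := by
    have := Finset.measurable_sum (Finset.univ) (fun k _ => hXmeas k)
    convert this using 1
    funext w
    exact Finset.sum_apply _ _ _
  have hUm : MeasurableSet U := measurableSet_le measurable_const hmeas
  have hLm : MeasurableSet L := measurableSet_le hmeas measurable_const
  have hbad : μ.real (U ∪ L) ≤ δ := (measureReal_union_le _ _).trans (by linarith)
  have hsub : (U ∪ L)ᶜ ⊆ {ωp | |(∑ k, X k ωp) / (r : ℝ) - q| < ε * p} := by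
    intro w hw
    simp only [hUdef, hLdef, Set.mem_compl_iff, Set.mem_union, Set.mem_ofPred_eq, not_or, not_le,
      Finset.sum_apply] at hw
    obtain ⟨hw1, hw2⟩ := hw
    have h1 : (∑ k, X k w) / (r : ℝ) < (1 + η) * p := by
      rw [div_lt_iff₀ hr0]; linarith
    have h2 : (1 - η) * p < (∑ k, X k w) / (r : ℝ) := by
      rw [lt_div_iff₀ hr0]; linarith
    have h3 := abs_le.1 hqp
    rw [hη] at h1 h2
    rw [Set.mem_ofPred_eq, abs_lt]
    constructor <;> nlinarith [h3.1, h3.2]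
  refine le_trans ?_ (measure_mono hsub)
  rw [← ofReal_measureReal (measure_ne_top μ _), probReal_compl_eq_one_sub (hUm.union hLm)]
  exact ENNReal.ofReal_le_ofReal (by linarith)

open MeasureTheory ProbabilityTheory in
/-- High-probability bound for the random-walk sampling approximation of the
influencer's social power. -/
theorem sampling_high_probability_bound
    (n : ℕ) (hn : 1 ≤ n) (W : Matrix (Fin n) (Fin n) ℝ)
    (hW0 : ∀ i j, 0 ≤ W i j) (hW1 : ∀ i, ∑ j, W i j = 1)
    (hconn : ∀ i j : Fin n, ∃ k, 1 ≤ k ∧ 0 < (W ^ k) i j)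
    (θv : Fin n → ℝ) (θ : ℝ) (hθ : θ ∈ Set.Ioc (0 : ℝ) 1)
    (hθv : ∀ i, θ ≤ θv i ∧ θv i ≤ 1)
    (ω : ℝ) (hω : ω ∈ Set.Ioo (0 : ℝ) 1)
    (S : Finset (Fin n)) (hS : S.Nonempty) (hSθ : ∃ i ∈ S, θv i < 1)
    (ℓ r : ℕ) (ε δ σ : ℝ)
    (hε : ε ∈ Set.Ioo (0 : ℝ) 1) (hδ : δ ∈ Set.Ioo (0 : ℝ) 1) (hσ : σ ∈ Set.Ioo (0 : ℝ) 1)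
    -- truncated absorbing probability `p_ℓ`
    (p : ℝ)
    (hp : p = (1 / n) * ∑ i, ((∑ k ∈ Finset.range (ℓ + 1), Hmat W θv ω S ^ k) *
      (1 - Matrix.diagonal θv)).mulVec (fun j => if j ∈ S then ω else 0) i)
    -- exact absorbing probability `q`
    (q : ℝ)
    (hq : q = (1 / n) * ∑ i, ((1 - Hmat W θv ω S)⁻¹ *
      (1 - Matrix.diagonal θv)).mulVec (fun j => if j ∈ S then ω else 0) i)
    (hr : 3 * Real.log (2 / δ) / (σ ^ 2 * ε ^ 2 * p) ≤ (r : ℝ))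
    (hℓ : (Real.log (θ * (1 - σ) * ε * p) - Real.log ω) / Real.log (1 - θ) - 2 ≤ (ℓ : ℝ))
    {Ω : Type} [MeasurableSpace Ω] (μ : Measure Ω) [IsProbabilityMeasure μ]
    (X : Fin r → Ω → ℝ) (hXmeas : ∀ k, Measurable (X k))
    (hXindep : iIndepFun X μ)
    (hX01 : ∀ k ωp, X k ωp = 0 ∨ X k ωp = 1)
    (hX1 : ∀ k, μ {ωp | X k ωp = 1} = ENNReal.ofReal p) :
    ENNReal.ofReal (1 - δ) ≤ μ {ωp | |(∑ k, X k ωp) / (r : ℝ) - q| < ε * p} := by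
  obtain ⟨hθ0, hθ1'⟩ := hθ
  obtain ⟨i0, hi0S, hi0⟩ := hSθ
  have hθ1 : θ < 1 := lt_of_le_of_lt (hθv i0).1 hi0
  obtain ⟨hH0, hH1⟩ := aux_H_facts n W hW0 hW1 θv θ hθv ω hω S
  obtain ⟨hω0, hω1⟩ := hω
  obtain ⟨hε0, hε1⟩ := hε
  obtain ⟨hδ0, hδ1⟩ := hδ
  obtain ⟨hσ0, hσ1⟩ := hσ
  have hn0 : (0 : ℝ) < n := by exact_mod_cast hn
  set H := Hmat W θv ω S with hH
  set v : Fin n → ℝ := (1 - Matrix.diagonal θv).mulVec (fun j => if j ∈ S then ω else 0) with hv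
  have hvf : ∀ i, v i = (1 - θv i) * (if i ∈ S then ω else 0) := by
    intro i
    rw [hv, Matrix.sub_mulVec, Matrix.one_mulVec, Pi.sub_apply, Matrix.mulVec_diagonal]
    ring
  have hv0 : ∀ i, 0 ≤ v i := by
    intro i
    rw [hvf]
    have := (hθv i).2
    split_ifs
    · exact mul_nonneg (by linarith) hω0.le
    · simp
  have hvB : ∀ i, |v i| ≤ (1 - θ) * ω := by
    intro i
    rw [abs_of_nonneg (hv0 i), hvf]
    have := (hθv i).1
    split_ifs
    · exact mul_le_mul_of_nonneg_right (by linarith) hω0.le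
    · rw [mul_zero]; exact mul_nonneg (by linarith) hω0.le
  have hB0 : 0 ≤ (1 - θ) * ω := mul_nonneg (by linarith) hω0.le
  simp_rw [← Matrix.mulVec_mulVec] at hp hq
  rw [← hv] at hp hq
  -- positivity of p
  have hge : ∀ i, v i ≤ ((∑ k ∈ Finset.range (ℓ + 1), H ^ k).mulVec v) i := by
    intro i
    rw [Matrix.sum_mulVec, Finset.sum_apply]
    have := Finset.single_le_sum (f := fun k => ((H ^ k).mulVec v) i)
      (fun k _ => aux_pow_nonneg H hH0 v hv0 k i) (Finset.mem_range.2 (Nat.succ_pos ℓ))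
    simpa using this
  have hp0 : 0 < p := by
    rw [hp]
    refine mul_pos (by positivity) ?_
    refine Finset.sum_pos' (fun i _ => (hv0 i).trans (hge i)) ⟨i0, Finset.mem_univ _, ?_⟩
    refine lt_of_lt_of_le ?_ (hge i0)
    rw [hvf, if_pos hi0S]
    exact mul_pos (by linarith) hω0
  -- tail bound
  have htail : |q - p| ≤ (1 - θ) ^ (ℓ + 1) * ((1 - θ) * ω / θ) := by
    rw [hp, hq, ← mul_sub, ← Finset.sum_sub_distrib, abs_mul, abs_of_pos (by positivity)]
    have : |∑ i, (((1 - H)⁻¹.mulVec v) i - ((∑ k ∈ Finset.range (ℓ + 1), H ^ k).mulVec v) i)|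
        ≤ n * ((1 - θ) ^ (ℓ + 1) * ((1 - θ) * ω / θ)) := by
      refine (Finset.abs_sum_le_sum_abs _ _).trans ?_
      refine (Finset.sum_le_sum fun i _ =>
        aux_tail H θ hθ0 hθ1' hH0 hH1 v _ hB0 hvB ℓ i).trans ?_
      simp
    rw [div_mul_eq_mul_div, one_mul, div_le_iff₀ hn0]
    linarith
  have hA : 0 < θ * (1 - σ) * ε * p :=
    mul_pos (mul_pos (mul_pos hθ0 (by linarith)) hε0) hp0
  have hlog : Real.log (1 - θ) < 0 := Real.log_neg (by linarith) (by linarith)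
  have hpow : (1 - θ) ^ (ℓ + 2) * ω ≤ θ * (1 - σ) * ε * p := by
    have h1 : (Real.log (θ * (1 - σ) * ε * p) - Real.log ω) / Real.log (1 - θ) ≤ (ℓ : ℝ) + 2 := by
      linarith
    rw [div_le_iff_of_neg hlog] at h1
    have hpp : 0 < (1 - θ) ^ (ℓ + 2) := pow_pos (by linarith) _
    rw [← Real.log_le_log_iff (mul_pos hpp hω0) hA, Real.log_mul hpp.ne' hω0.ne', Real.log_pow]
    push_cast
    linarith
  have hqp : |q - p| ≤ (1 - σ) * ε * p := by
    refine htail.trans ?_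
    have : (1 - θ) ^ (ℓ + 1) * ((1 - θ) * ω / θ) = (1 - θ) ^ (ℓ + 2) * ω / θ := by ring
    rw [this, div_le_iff₀ hθ0]
    linarith
  -- Chernoff
  set η := σ * ε with hη
  have hη0 : 0 < η := mul_pos hσ0 hε0
  have hη1 : η < 1 := by nlinarith
  have hL : 0 < Real.log (2 / δ) := Real.log_pos (by rw [lt_div_iff₀ hδ0]; linarith)
  have hden : 0 < σ ^ 2 * ε ^ 2 * p := by positivity
  have hr0 : (0 : ℝ) < r := lt_of_lt_of_le (by positivity) hr
  have hexp : Real.exp (-(r * p * (η ^ 2 / 3))) ≤ δ / 2 := by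
    rw [div_le_iff₀ hden] at hr
    have : Real.log (2 / δ) ≤ r * p * (η ^ 2 / 3) := by rw [hη]; nlinarith
    calc _ ≤ Real.exp (-Real.log (2 / δ)) := Real.exp_le_exp.2 (by linarith)
      _ = δ / 2 := by rw [Real.exp_neg, Real.exp_log (by positivity), inv_div]
  exact aux_final μ r X hXmeas hXindep hX01 p q σ ε δ η hp0 hX1 hη hη0 hη1 hr0 hexp hqp
end

section
/- Let W be an n×n real row-stochastic matrix and ω ∈ [0,1]. For i ∈ V define H_i = (I − ω e_i e_iᵀ) W and g_i = (1 − ω) W_{ii} + Σ_{j ≠ i} W_{ji}. Then 𝟙ᵀ H_i² 𝟙 = n − ω − ω g_i. -/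
open Matrix Finset

/-- `𝟙ᵀ H_i² 𝟙 = n - ω - ω g_i` where `H_i = (I - ω e_i e_iᵀ) W`. -/
theorem ones_Hi_sq_ones
    (n : ℕ) (hn : 1 ≤ n) (W : Matrix (Fin n) (Fin n) ℝ)
    (hW0 : ∀ i j, 0 ≤ W i j) (hW1 : ∀ i, ∑ j, W i j = 1)
    (ω : ℝ) (hω : ω ∈ Set.Icc (0 : ℝ) 1) (i : Fin n) :
    ∑ a, ∑ b,
        ((((1 - ω • Matrix.single i i (1 : ℝ)) * W : Matrix (Fin n) (Fin n) ℝ) ^ 2)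
          a b)
      = n - ω - ω * ((1 - ω) * W i i + ∑ j ∈ Finset.univ.erase i, W j i) := by
  have hH : ∀ a b, ((1 - ω • Matrix.single i i (1 : ℝ)) * W : Matrix (Fin n) (Fin n) ℝ) a b
      = (if a = i then 1 - ω else 1) * W a b := by
    intro a b
    rw [sub_mul, one_mul, smul_mul_assoc, Matrix.sub_apply, Matrix.smul_apply, smul_eq_mul]
    by_cases h : a = i
    · subst h
      simp
      ring
    · simp [h]
  generalize ((1 - ω • Matrix.single i i (1 : ℝ)) * W : Matrix (Fin n) (Fin n) ℝ) = H at hH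
  have hrow : ∀ a, ∑ b, H a b = 1 - (if a = i then ω else 0) := by
    intro a
    simp only [hH]
    rw [← Finset.mul_sum, hW1]
    split_ifs <;> ring
  have hrow2 : ∀ a, ∑ b, (H ^ 2) a b = (1 - (if a = i then ω else 0)) - ω * H a i := by
    intro a
    simp only [pow_two, Matrix.mul_apply]
    rw [Finset.sum_comm]
    simp only [← Finset.mul_sum, hrow, mul_sub, mul_one, Finset.sum_sub_distrib]
    simp [mul_comm]
  have hcol : ∑ a, H a i = (1 - ω) * W i i + ∑ j ∈ Finset.univ.erase i, W j i := by
    rw [← Finset.add_sum_erase _ _ (Finset.mem_univ i), hH]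
    simp only [if_true]
    congr 1
    refine Finset.sum_congr rfl fun j hj => ?_
    rw [hH, if_neg (Finset.ne_of_mem_erase hj), one_mul]
  simp only [hrow2, Finset.sum_sub_distrib, ← Finset.mul_sum, hcol]
  simp
end
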